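/- For every integer k ≥ 10, every ε > 0 and every N, there exists an input list L such that OPT(L) ≥ N and FF(L) ≥ (2.7 − 3/k − ε)·OPT(L), where FF is First Fit with cardinality constraint k. Consequently, the asymptotic competitive ratio of First Fit for k ≥ 10 is at least 2.7 − 3/k. -/

import Mathlib

/-!
The input superposes tiny items on the classical `1.7` lower bound for First Fit. Let
`δ_i = 22⁻ⁱ / 1000` for `i < M`. In this order, First Fit receives

* `10 M (k - 3)` tiny items, packed `k` to a bin;
* for each `i`, two groups consisting of four items `1/6 - δ_i` and one item `1/6 + 6 δ_i`;
* for each `i`, five pairs `1/3 + 21 δ_i`, `1/3 - 7 δ_i`;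
* `10 M` items slightly larger than `1/2`.

Every group (five items, two items, one item) fills a First Fit bin of its own, since the total size
of a group exceeds `5/6`, `2/3`, `1/2` respectively by more than the deficit of any later item
(`FF_flatten`). Hence `FF = 10 M (1 - 3/k) + 17 M` when `k ∣ M`.

On the other hand `k - 3` tiny items and one large item can share a bin with any of the pairs
`(1/6 + 6 δ_i, 1/3 - 7 δ_i)`, `(1/6 - δ_i, 1/3 - 7 δ_i)`, `(1/6 - δ_i, 1/3 + 21 δ_{i+1})`, because
each of them has total size at most `1/2 - δ_{M-1}`. Taking `2`, `3`, `5` copies of these for every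
`i` (for `i = M - 1` the last kind of bin simply lacks its third) leaves only five items
`1/3 + 21 δ_0`, which get bins of their own (`packs_total`), so `OPT ≤ 10 M + 5`. As there are `10 M k` items, `OPT ≥ 10 M`.
-/

open scoped Classical
noncomputable section

/-- An input is a list of item sizes, each in (0,1]. -/
def ValidInput (L : List ℝ) : Prop := ∀ x ∈ L, 0 < x ∧ x ≤ 1

/-- A packing assigns a bin index to each item; it is feasible for cardinality
constraint `k` if every bin receives at most `k` items of total size at most 1. -/
def IsFeasible (k : ℕ) (L : List ℝ) (f : Fin L.length → ℕ) : Prop :=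
  ∀ b : ℕ,
    (Finset.univ.filter (fun i => f i = b)).card ≤ k ∧
    ∑ i ∈ Finset.univ.filter (fun i => f i = b), L.get i ≤ 1

/-- The number of bins used by a packing. -/
def binsUsed (L : List ℝ) (f : Fin L.length → ℕ) : ℕ :=
  (Finset.univ.image f).card

/-- The optimal (minimum) number of bins in a feasible packing of `L`. -/
def OPT (k : ℕ) (L : List ℝ) : ℕ :=
  sInf {n | ∃ f : Fin L.length → ℕ, IsFeasible k L f ∧ binsUsed L f = n}

/-- A deterministic online algorithm is a strategy: given the items seen so far
(ending with the item to be packed), it returns the bin index for that item. -/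
def onlinePacking (A : List ℝ → ℕ) (L : List ℝ) : Fin L.length → ℕ :=
  fun i => A (L.take (i.1 + 1))

/-- The strategy `A` is a valid online algorithm for cardinality constraint `k`
if on every valid input the induced packing is feasible. -/
def OnlineValid (k : ℕ) (A : List ℝ → ℕ) : Prop :=
  ∀ L : List ℝ, ValidInput L → IsFeasible k L (onlinePacking A L)

/-- The number of bins used by online algorithm `A` on input `L`. -/
def onlineBins (A : List ℝ → ℕ) (L : List ℝ) : ℕ :=
  binsUsed L (onlinePacking A L)

/-- The state of First Fit: a list of open bins (in order of opening),
each recorded as (number of items, total size). `ffFind` returns the index of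
the first bin that can receive an item of size `x` (it has at most `k-1` items
and the item fits); if none, the index of a new bin. -/
def ffFind (k : ℕ) (x : ℝ) : List (ℕ × ℝ) → ℕ
  | [] => 0
  | b :: bs => if b.1 < k ∧ b.2 + x ≤ 1 then 0 else ffFind k x bs + 1

/-- Update the First Fit state after packing an item of size `x`. -/
def ffUpdate (k : ℕ) (x : ℝ) : List (ℕ × ℝ) → List (ℕ × ℝ)
  | [] => [(1, x)]
  | b :: bs =>
      if b.1 < k ∧ b.2 + x ≤ 1 then (b.1 + 1, b.2 + x) :: bs
      else b :: ffUpdate k x bs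

/-- The final state of First Fit with cardinality constraint `k` on input `L`. -/
def ffState (k : ℕ) (L : List ℝ) : List (ℕ × ℝ) :=
  L.foldl (fun bs x => ffUpdate k x bs) []

/-- The number of bins used by First Fit with cardinality constraint `k` on `L`. -/
def FF (k : ℕ) (L : List ℝ) : ℕ := (ffState k L).length

/-- The bin index into which First Fit packs the `i`-th item of `L`. -/
def ffAssign (k : ℕ) (L : List ℝ) (i : Fin L.length) : ℕ :=
  ffFind k (L.get i) (ffState k (L.take i.1))

/-! ### First Fit on a list given group by group -/

/-- A bin with `b.1` items and total size `b.2` that First Fit cannot use for an item `x`. -/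
def Closed (k : ℕ) (b : ℕ × ℝ) (x : ℝ) : Prop := ¬ (b.1 < k ∧ b.2 + x ≤ 1)

lemma ffUpdate_append {k : ℕ} {x : ℝ} {S : List (ℕ × ℝ)} (h : ∀ b ∈ S, Closed k b x)
    (T : List (ℕ × ℝ)) : ffUpdate k x (S ++ T) = S ++ ffUpdate k x T := by
  induction S with
  | nil => rfl
  | cons b S ih =>
    have hb : ¬ (b.1 < k ∧ b.2 + x ≤ 1) := h b (by simp)
    simp only [List.cons_append, ffUpdate, if_neg hb]
    rw [ih fun c hc => h c (by simp [hc])]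

lemma foldl_fill {k : ℕ} {S : List (ℕ × ℝ)} (l : List ℝ) :
    ∀ (c : ℕ) (v : ℝ), (∀ x ∈ l, 0 < x) → (∀ x ∈ l, ∀ b ∈ S, Closed k b x) →
      c + l.length ≤ k → v + l.sum ≤ 1 →
      l.foldl (fun bs x => ffUpdate k x bs) (S ++ [(c, v)])
        = S ++ [(c + l.length, v + l.sum)] := by
  induction l with
  | nil => intro c v _ _ _ _; simp
  | cons x l ih =>
    intro c v hpos hS hk hv
    simp only [List.length_cons, List.sum_cons] at hk hv
    have hl : 0 ≤ l.sum := List.sum_nonneg fun y hy => (hpos y (by simp [hy])).le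
    have hfit : c < k ∧ v + x ≤ 1 := ⟨by omega, by linarith⟩
    rw [List.foldl_cons, ffUpdate_append (hS x (by simp))]
    simp only [ffUpdate, if_pos hfit]
    rw [ih (c + 1) (v + x) (fun y hy => hpos y (by simp [hy]))
      (fun y hy => hS y (by simp [hy])) (by omega) (by linarith)]
    simp only [List.length_cons, List.sum_cons]
    congr 3
    · omega
    · ring

/-- A nonempty feasible group of items none of which fits into an open bin fills one new bin. -/
lemma foldl_group {k : ℕ} {S : List (ℕ × ℝ)} {l : List ℝ} (hne : l ≠ [])
    (hpos : ∀ x ∈ l, 0 < x) (hS : ∀ x ∈ l, ∀ b ∈ S, Closed k b x)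
    (hk : l.length ≤ k) (hv : l.sum ≤ 1) :
    l.foldl (fun bs x => ffUpdate k x bs) S = S ++ [(l.length, l.sum)] := by
  cases l with
  | nil => exact absurd rfl hne
  | cons x l =>
    simp only [List.length_cons, List.sum_cons] at hk hv
    have h1 : ffUpdate k x S = S ++ [(1, x)] := by
      have := ffUpdate_append (hS x (by simp)) []
      simpa [ffUpdate] using this
    rw [List.foldl_cons, h1, foldl_fill l 1 x (fun y hy => hpos y (by simp [hy]))
      (fun y hy => hS y (by simp [hy])) (by omega) hv]
    simp [add_comm]

/-- A group that can fill one bin. -/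
def GoodGroup (k : ℕ) (l : List ℝ) : Prop :=
  l ≠ [] ∧ (∀ x ∈ l, 0 < x) ∧ l.length ≤ k ∧ l.sum ≤ 1

/-- Once the group `l` fills a bin, no item of the later group `l'` can join it. -/
def Blocks (k : ℕ) (l l' : List ℝ) : Prop :=
  ∀ x ∈ l', l.length = k ∨ 1 < l.sum + x

lemma foldl_flatten {k : ℕ} (G : List (List ℝ)) :
    ∀ S : List (ℕ × ℝ), (∀ l ∈ G, GoodGroup k l) → G.Pairwise (Blocks k) →
      (∀ l ∈ G, ∀ x ∈ l, ∀ b ∈ S, Closed k b x) →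
      G.flatten.foldl (fun bs x => ffUpdate k x bs) S
        = S ++ G.map (fun l => (l.length, l.sum)) := by
  induction G with
  | nil => intro S _ _ _; simp
  | cons l G ih =>
    intro S hG hP hS
    obtain ⟨hne, hpos, hk, hv⟩ := hG l (by simp)
    rw [List.pairwise_cons] at hP
    rw [List.flatten_cons, List.foldl_append, foldl_group hne hpos (hS l (by simp)) hk hv,
      ih _ (fun l' hl' => hG l' (by simp [hl'])) hP.2]
    · simp
    · intro l' hl' x hx b hb
      rw [List.mem_append, List.mem_singleton] at hb
      rcases hb with hb | rfl
      · exact hS l' (by simp [hl']) x hx b hb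
      · rintro ⟨h1, h2⟩
        rcases hP.1 l' hl' x hx with h | h
        · exact absurd h h1.ne
        · exact absurd h2 (not_le.mpr h)

/-- First Fit packs each group into a bin of its own if no group leaves room for an item of a
later one. -/
lemma FF_flatten {k : ℕ} {G : List (List ℝ)} (hG : ∀ l ∈ G, GoodGroup k l)
    (hP : G.Pairwise (Blocks k)) : FF k G.flatten = G.length := by
  rw [FF, ffState, foldl_flatten G [] hG hP (by simp)]
  simp

/-! ### Bounding the optimum -/

/-- `s` can be split into exactly `n` feasible bins, some of them possibly empty. -/
def Packs (k : ℕ) (s : Multiset ℝ) (n : ℕ) : Prop :=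
  ∃ C : Multiset (Multiset ℝ), C.card = n ∧ C.sum = s ∧ ∀ b ∈ C, b.card ≤ k ∧ b.sum ≤ 1

lemma Packs.add {k n m : ℕ} {s t : Multiset ℝ} (hs : Packs k s n) (ht : Packs k t m) :
    Packs k (s + t) (n + m) := by
  obtain ⟨C, rfl, rfl, hC⟩ := hs
  obtain ⟨D, rfl, rfl, hD⟩ := ht
  refine ⟨C + D, by simp, by simp, fun b hb => ?_⟩
  rcases Multiset.mem_add.mp hb with h | h
  exacts [hC b h, hD b h]

lemma Packs.bins {k : ℕ} {s : Multiset ℝ} (n : ℕ) (h1 : s.card ≤ k) (h2 : s.sum ≤ 1) :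
    Packs k (n • s) n := by
  refine ⟨Multiset.replicate n s, by simp, by simp, fun b hb => ?_⟩
  rw [Multiset.eq_of_mem_replicate hb]
  exact ⟨h1, h2⟩

lemma Packs.sum {k : ℕ} {s : ℕ → Multiset ℝ} {m n : ℕ} (h : ∀ i < n, Packs k (s i) m) :
    Packs k (∑ i ∈ Finset.range n, s i) (n * m) := by
  induction n with
  | zero => exact ⟨0, by simp, by simp, by simp⟩
  | succ n ih =>
    rw [Finset.sum_range_succ, Nat.succ_mul]
    exact (ih fun i hi => h i (by omega)).add (h n (by omega))

/-- An arrangement of the values `s.map Prod.fst` in a list lifts to an arrangement of `s`. -/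
lemma exists_list_lift (L : List ℝ) : ∀ s : Multiset (ℝ × ℕ), s.map Prod.fst = (L : Multiset ℝ) →
    ∃ P : List (ℝ × ℕ), (P : Multiset (ℝ × ℕ)) = s ∧ P.map Prod.fst = L := by
  induction L with
  | nil =>
    intro s hs
    refine ⟨[], ?_, rfl⟩
    have : s.map Prod.fst = 0 := hs
    rw [Multiset.map_eq_zero] at this
    rw [this]; rfl
  | cons x L ih =>
    intro s hs
    have hx : x ∈ s.map Prod.fst := by rw [hs]; simp
    obtain ⟨p, hp, rfl⟩ := Multiset.mem_map.mp hx
    obtain ⟨s', rfl⟩ := Multiset.exists_cons_of_mem hp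
    rw [Multiset.map_cons, ← Multiset.cons_coe, Multiset.cons_inj_right] at hs
    obtain ⟨P, rfl, rfl⟩ := ih s' hs
    exact ⟨p :: P, rfl, rfl⟩

/-- Labels the bins `C` by `0, 1, …` and records each item with the label of its bin. -/
lemma exists_labelling {k : ℕ} (C : List (Multiset ℝ)) (hC : ∀ b ∈ C, b.card ≤ k ∧ b.sum ≤ 1) :
    ∃ s : Multiset (ℝ × ℕ), s.map Prod.fst = C.sum ∧ (∀ p ∈ s, p.2 < C.length) ∧
      ∀ j, (s.filter fun p => p.2 = j).card ≤ k ∧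
        ((s.filter fun p => p.2 = j).map Prod.fst).sum ≤ 1 := by
  induction C with
  | nil => exact ⟨0, by simp, by simp, by simp⟩
  | cons b C ih =>
    obtain ⟨s, h1, h2, h3⟩ := ih fun c hc => hC c (by simp [hc])
    refine ⟨b.map (fun x => (x, C.length)) + s, ?_, ?_, ?_⟩
    · simp [h1]
    · intro p hp
      rcases Multiset.mem_add.mp hp with h | h
      · obtain ⟨x, _, rfl⟩ := Multiset.mem_map.mp h
        simp
      · exact (h2 p h).trans (by simp)
    · intro j
      rw [Multiset.filter_add]
      by_cases hj : j = C.length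
      · subst hj
        have e1 : s.filter (fun p => p.2 = C.length) = 0 :=
          Multiset.filter_eq_nil.mpr fun p hp => (h2 p hp).ne
        have e2 : (b.map (fun x => (x, C.length))).filter (fun p => p.2 = C.length)
            = b.map (fun x => (x, C.length)) := by
          rw [Multiset.filter_eq_self]
          intro p hp
          obtain ⟨x, _, rfl⟩ := Multiset.mem_map.mp hp
          rfl
        rw [e1, e2]
        simpa using hC b (by simp)
      · have e2 : (b.map (fun x => (x, C.length))).filter (fun p => p.2 = j) = 0 := by
          rw [Multiset.filter_eq_nil]
          intro p hp
          obtain ⟨x, _, rfl⟩ := Multiset.mem_map.mp hp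
          exact fun h => hj h.symm
        rw [e2, zero_add]
        exact h3 j

lemma exists_packing {k n : ℕ} {L : List ℝ} (h : Packs k (L : Multiset ℝ) n) :
    ∃ f, IsFeasible k L f ∧ binsUsed L f ≤ n := by
  obtain ⟨C, hn, hs, hC⟩ := h
  obtain ⟨C, rfl⟩ := Quot.exists_rep C
  change Multiset.card (C : Multiset (Multiset ℝ)) = n at hn
  change (C : Multiset (Multiset ℝ)).sum = _ at hs
  rw [Multiset.coe_card] at hn
  rw [Multiset.sum_coe] at hs
  obtain ⟨s, h1, h2, h3⟩ := exists_labelling C (k := k) hC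
  obtain ⟨P, rfl, rfl⟩ := exists_list_lift L s (h1.trans hs)
  have hlen : (P.map Prod.fst).length = P.length := by simp
  let f : Fin (P.map Prod.fst).length → ℕ := fun i => (P.get (i.cast hlen)).2
  have key : ∀ j, (((Finset.univ.filter fun i => f i = j).val.map
      fun i => P.get (i.cast hlen)) : Multiset (ℝ × ℕ)) = (P : Multiset _).filter fun p => p.2 = j := by
    intro j
    have e : ((Finset.univ : Finset (Fin (P.map Prod.fst).length)).val.map
        fun i => P.get (i.cast hlen)) = (P : Multiset _) := by
      have : ∀ (n : ℕ) (hn : n = P.length), ((Finset.univ : Finset (Fin n)).val.map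
          fun i => P.get (i.cast hn)) = (P : Multiset _) := by
        rintro _ rfl
        simp [Fin.univ_val_map]
      exact this _ hlen
    rw [← e, Multiset.filter_map, Finset.filter_val]
    rfl
  have hfeas : IsFeasible k (P.map Prod.fst) f := by
    intro j
    obtain ⟨g1, g2⟩ := h3 j
    rw [← key j, Multiset.card_map] at g1
    rw [← key j, Multiset.map_map] at g2
    refine ⟨g1, ?_⟩
    have : ∀ i, (P.map Prod.fst).get i = (Prod.fst ∘ fun i => P.get (i.cast hlen)) i := by
      intro i; simp
    rw [Finset.sum_congr rfl fun i _ => this i]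
    exact g2
  have hbins : binsUsed (P.map Prod.fst) f ≤ n := by
    calc binsUsed (P.map Prod.fst) f ≤ (Finset.range n).card := by
          apply Finset.card_le_card
          intro j hj
          obtain ⟨i, _, rfl⟩ := Finset.mem_image.mp hj
          rw [Finset.mem_range, ← hn]
          exact h2 _ (by simp)
      _ = n := Finset.card_range n
  exact ⟨f, hfeas, hbins⟩

lemma OPT_le_of_packs {k n : ℕ} {L : List ℝ} (h : Packs k (L : Multiset ℝ) n) : OPT k L ≤ n := by
  obtain ⟨f, hf, hn⟩ := exists_packing h
  exact le_trans (Nat.sInf_le (by exact ⟨f, hf, rfl⟩)) hn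

/-- The cardinality constraint alone forces `length / k` bins. Some feasible packing has to exist,
since otherwise `OPT` is the infimum of the empty set, which is `0`. -/
lemma length_le_mul_OPT {k n : ℕ} {L : List ℝ} (h : Packs k (L : Multiset ℝ) n) :
    L.length ≤ k * OPT k L := by
  obtain ⟨g, hg, -⟩ := exists_packing h
  obtain ⟨f, hf, hfn⟩ : OPT k L ∈ {n | ∃ f, IsFeasible k L f ∧ binsUsed L f = n} :=
    Nat.sInf_mem ⟨_, g, hg, rfl⟩
  rw [← hfn, binsUsed]
  have := Finset.card_le_mul_card_image (f := f) Finset.univ k fun j _ => (hf j).1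
  simpa using this

/-! ### The input -/

/-- The perturbation scale of the `i`-th block. The ratio `22` makes
`21 δ_{i+1} + δ_{i+1} ≤ δ_i`. -/
def dl (i : ℕ) : ℝ := (1 / 22) ^ i / 1000

lemma dl_pos (i : ℕ) : 0 < dl i := by unfold dl; positivity

lemma dl_succ (i : ℕ) : 22 * dl (i + 1) = dl i := by unfold dl; rw [pow_succ]; ring

lemma dl_anti {i j : ℕ} (h : i ≤ j) : dl j ≤ dl i := by
  unfold dl
  have := pow_le_pow_of_le_one (by norm_num : (0 : ℝ) ≤ 1 / 22) (by norm_num) h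
  linarith

lemma dl_le (i : ℕ) : dl i ≤ 1 / 1000 := by
  have := dl_anti (Nat.zero_le i)
  simpa [dl] using this

/-- A First Fit bin of five items near `1/6`, of total size `5/6 + 2 δ_i`. -/
def sixths (i : ℕ) : List ℝ :=
  [1 / 6 - dl i, 1 / 6 - dl i, 1 / 6 - dl i, 1 / 6 - dl i, 1 / 6 + 6 * dl i]

/-- A First Fit bin of two items near `1/3`, of total size `2/3 + 14 δ_i`. -/
def thirds (i : ℕ) : List ℝ := [1 / 3 + 21 * dl i, 1 / 3 - 7 * dl i]

/-- The input with `M` blocks, tiny items of size `t` and large items of size `h`, listed as the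
groups that First Fit puts together; `p` is the number of groups of tiny items. -/
def groups (k p M : ℕ) (t h : ℝ) : List (List ℝ) :=
  List.replicate p (List.replicate k t) ++
    ((List.range M).flatMap (fun i => List.replicate 2 (sixths i)) ++
      ((List.range M).flatMap (fun i => List.replicate 5 (thirds i)) ++
        List.replicate (10 * M) [h]))

lemma mem_groups {k p M : ℕ} {t h : ℝ} {l : List ℝ} (hl : l ∈ groups k p M t h) :
    l = List.replicate k t ∨ (∃ i, l = sixths i) ∨ (∃ i, l = thirds i) ∨ l = [h] := by
  simp only [groups, List.mem_append, List.mem_flatMap, List.mem_replicate] at hl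
  rcases hl with h | ⟨i, _, _, h⟩ | ⟨i, _, _, h⟩ | h
  exacts [.inl h.2, .inr (.inl ⟨i, h⟩), .inr (.inr (.inl ⟨i, h⟩)), .inr (.inr (.inr h.2))]

lemma groups_good {k p M : ℕ} {t h : ℝ} (hk : 10 ≤ k) (ht : 0 < t) (hkt : k * t ≤ 1)
    (hh : 1 / 2 < h) (hh1 : h ≤ 1) : ∀ l ∈ groups k p M t h, GoodGroup k l := by
  intro l hl
  rcases mem_groups hl with rfl | ⟨i, rfl⟩ | ⟨i, rfl⟩ | rfl
  · refine ⟨?_, ?_, ?_, ?_⟩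
    · rw [Ne, List.replicate_eq_nil_iff]; omega
    · intro x hx; rwa [List.eq_of_mem_replicate hx]
    · simp
    · simpa using hkt
  all_goals try have h1 := dl_pos i
  all_goals try have h2 := dl_le i
  · refine ⟨by simp [sixths], ?_, by simp [sixths]; omega, ?_⟩
    · intro x hx
      simp only [sixths, List.mem_cons, List.not_mem_nil, or_false] at hx
      rcases hx with rfl | rfl | rfl | rfl | rfl <;> linarith
    · simp only [sixths, List.sum_cons, List.sum_nil]; linarith
  · refine ⟨by simp [thirds], ?_, by simp [thirds]; omega, ?_⟩
    · intro x hx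
      simp only [thirds, List.mem_cons, List.not_mem_nil, or_false] at hx
      rcases hx with rfl | rfl <;> linarith
    · simp only [thirds, List.sum_cons, List.sum_nil]; linarith
  · refine ⟨by simp, ?_, by simp; omega, by simpa using hh1⟩
    intro x hx
    rw [List.mem_singleton] at hx
    linarith

lemma blocks_replicate {k : ℕ} {t : ℝ} (l : List ℝ) : Blocks k (List.replicate k t) l :=
  fun _ _ => .inl (by simp)

/-- A group of sixths leaves room only for items of size at most `1/6 - 2 δ_i`. -/
lemma blocks_sixths {k i : ℕ} {l : List ℝ} (h : ∀ x ∈ l, 1 / 6 - dl i ≤ x) :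
    Blocks k (sixths i) l := by
  intro x hx
  right
  have := h x hx
  have := dl_pos i
  simp only [sixths, List.sum_cons, List.sum_nil]
  linarith

/-- A group of thirds leaves room only for items of size at most `1/3 - 14 δ_i`. -/
lemma blocks_thirds {k i : ℕ} {l : List ℝ} (h : ∀ x ∈ l, 1 / 3 - 7 * dl i ≤ x) :
    Blocks k (thirds i) l := by
  intro x hx
  right
  have := h x hx
  have := dl_pos i
  simp only [thirds, List.sum_cons, List.sum_nil]
  linarith

lemma le_of_mem_sixths {i : ℕ} {x : ℝ} (hx : x ∈ sixths i) : 1 / 6 - dl i ≤ x := by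
  have := dl_pos i
  simp only [sixths, List.mem_cons, List.not_mem_nil, or_false] at hx
  rcases hx with rfl | rfl | rfl | rfl | rfl <;> linarith

lemma le_of_mem_thirds {i : ℕ} {x : ℝ} (hx : x ∈ thirds i) : 1 / 3 - 7 * dl i ≤ x := by
  have := dl_pos i
  simp only [thirds, List.mem_cons, List.not_mem_nil, or_false] at hx
  rcases hx with rfl | rfl <;> linarith

lemma groups_pairwise {k p M : ℕ} {t h : ℝ} (hh : 1 / 2 < h) :
    (groups k p M t h).Pairwise (Blocks k) := by
  have s6 : ∀ {i j}, i ≤ j → Blocks k (sixths i) (sixths j) := fun hij =>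
    blocks_sixths fun x hx => by have := le_of_mem_sixths hx; have := dl_anti hij; linarith
  have s3 : ∀ {i j}, i ≤ j → Blocks k (thirds i) (thirds j) := fun hij =>
    blocks_thirds fun x hx => by have := le_of_mem_thirds hx; have := dl_anti hij; linarith
  rw [groups, List.pairwise_append, List.pairwise_append, List.pairwise_append,
    List.pairwise_flatMap, List.pairwise_flatMap]
  refine ⟨?_, ⟨⟨?_, ?_⟩, ⟨⟨?_, ?_⟩, ?_, ?_⟩, ?_⟩, ?_⟩
  · exact List.pairwise_replicate.mpr (.inr (blocks_replicate _))
  · exact fun i _ => List.pairwise_replicate.mpr (.inr (s6 le_rfl))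
  · refine List.pairwise_lt_range.imp fun hij l hl l' hl' => ?_
    rw [List.eq_of_mem_replicate hl, List.eq_of_mem_replicate hl']
    exact s6 hij.le
  · exact fun i _ => List.pairwise_replicate.mpr (.inr (s3 le_rfl))
  · refine List.pairwise_lt_range.imp fun hij l hl l' hl' => ?_
    rw [List.eq_of_mem_replicate hl, List.eq_of_mem_replicate hl']
    exact s3 hij.le
  · refine List.pairwise_replicate.mpr (.inr fun x hx => .inr ?_)
    rw [List.mem_singleton] at hx
    simp only [List.sum_cons, List.sum_nil]
    linarith
  · intro l hl l' hl'
    obtain ⟨i, -, hi⟩ := List.mem_flatMap.mp hl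
    rw [List.eq_of_mem_replicate hi, List.eq_of_mem_replicate hl']
    refine blocks_thirds fun x hx => ?_
    rw [List.mem_singleton] at hx
    have := dl_pos i
    linarith
  · intro l hl l' hl'
    obtain ⟨i, -, hi⟩ := List.mem_flatMap.mp hl
    rw [List.eq_of_mem_replicate hi]
    refine blocks_sixths fun x hx => ?_
    have := dl_pos i
    rcases List.mem_append.mp hl' with hl' | hl'
    · obtain ⟨j, -, hj⟩ := List.mem_flatMap.mp hl'
      rw [List.eq_of_mem_replicate hj] at hx
      have := le_of_mem_thirds hx
      have := dl_le j
      linarith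
    · rw [List.eq_of_mem_replicate hl', List.mem_singleton] at hx
      linarith
  · intro l hl l' _
    rw [List.eq_of_mem_replicate hl]
    exact blocks_replicate _

lemma groups_length (k p M : ℕ) (t h : ℝ) : (groups k p M t h).length = p + 17 * M := by
  simp [groups, List.length_flatMap]
  ring

lemma coe_flatMap_range {f : ℕ → List (List ℝ)} (M : ℕ) :
    ((((List.range M).flatMap f).flatten : List ℝ) : Multiset ℝ)
      = ∑ i ∈ Finset.range M, (((f i).flatten : List ℝ) : Multiset ℝ) := by
  induction M with
  | zero => simp
  | succ M ih =>
    rw [List.range_succ, List.flatMap_append, List.flatten_append, ← Multiset.coe_add, ih,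
      Finset.sum_range_succ]
    simp

lemma coe_flatten_replicate (n : ℕ) (l : List ℝ) :
    (((List.replicate n l).flatten : List ℝ) : Multiset ℝ) = n • (l : Multiset ℝ) := by
  induction n with
  | zero => simp
  | succ n ih =>
    rw [List.replicate_succ, List.flatten_cons, ← Multiset.coe_add, ih, succ_nsmul']

lemma coe_sixths (i : ℕ) : (sixths i : Multiset ℝ)
    = 4 • {1 / 6 - dl i} + {1 / 6 + 6 * dl i} := rfl

lemma coe_thirds (i : ℕ) : (thirds i : Multiset ℝ)
    = {1 / 3 + 21 * dl i} + {1 / 3 - 7 * dl i} := rfl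

lemma coe_groups (k p M : ℕ) (t h : ℝ) : ((groups k p M t h).flatten : Multiset ℝ)
    = (p * k) • {t} + (∑ i ∈ Finset.range M, 2 • (4 • {1 / 6 - dl i} + {1 / 6 + 6 * dl i})
      + (∑ i ∈ Finset.range M, 5 • ({1 / 3 + 21 * dl i} + {1 / 3 - 7 * dl i})
      + (10 * M) • {h})) := by
  have hrep : (List.replicate k t : Multiset ℝ) = k • {t} := by
    rw [Multiset.nsmul_singleton]; rfl
  rw [groups]
  simp only [List.flatten_append, ← Multiset.coe_add, coe_flatMap_range, coe_flatten_replicate,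
    coe_sixths, coe_thirds, hrep, Multiset.coe_singleton, mul_nsmul']

/-- The packing behind `OPT ≤ 10 M + 5`, with `M = m + 1`. The smallest scale is `δ_m`, so it
suffices that a large item and `k - 3` tiny ones have total size at most `1/2 + δ_m`. -/
lemma packs_total {k p m : ℕ} {t h : ℝ} (hk : 10 ≤ k) (hp : p * k = 10 * (m + 1) * (k - 3))
    (hsum : ((k - 3 : ℕ) : ℝ) * t + h ≤ 1 / 2 + dl m) :
    Packs k ((groups k p (m + 1) t h).flatten : Multiset ℝ) (10 * (m + 1) + 5) := by
  -- the part common to all bins but the last five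
  set U : Multiset ℝ := (k - 3) • {t} + {h} with hU
  have hUc : U.card = k - 2 := by simp [hU]; omega
  have hUs : U.sum ≤ 1 / 2 + dl m := by simpa [hU, Multiset.sum_nsmul] using hsum
  have pair : ∀ (n : ℕ) (x y : ℝ), x + y ≤ 1 / 2 - dl m → Packs k (n • (U + {x} + {y})) n := by
    intro n x y hxy
    apply Packs.bins
    · simp [hUc]; omega
    · simp only [Multiset.sum_add, Multiset.sum_singleton]; linarith
  have hm := dl_pos m
  have hm1 := dl_le m
  have A : Packs k (∑ i ∈ Finset.range (m + 1),
      (2 • (U + {1 / 6 + 6 * dl i} + {1 / 3 - 7 * dl i})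
        + 3 • (U + {1 / 6 - dl i} + {1 / 3 - 7 * dl i}))) ((m + 1) * (2 + 3)) := by
    refine Packs.sum fun i hi => (pair _ _ _ ?_).add (pair _ _ _ ?_)
    all_goals
      have := dl_anti (Nat.lt_succ_iff.mp hi)
      linarith
  have B : Packs k (∑ i ∈ Finset.range m,
      5 • (U + {1 / 6 - dl i} + {1 / 3 + 21 * dl (i + 1)})) (m * 5) := by
    refine Packs.sum fun i hi => pair _ _ _ ?_
    have := dl_anti (Nat.succ_le_of_lt hi)
    have := dl_succ i
    linarith
  have C : Packs k (5 • (U + {1 / 6 - dl m})) 5 := by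
    apply Packs.bins
    · simp [hUc]; omega
    · simp only [Multiset.sum_add, Multiset.sum_singleton]; linarith
  have D : Packs k (5 • {1 / 3 + 21 * dl 0}) 5 := by
    apply Packs.bins
    · simp; omega
    · have := dl_le 0
      simp only [Multiset.sum_singleton]; linarith
  have E := ((A.add B).add C).add D
  have hn : (m + 1) * (2 + 3) + m * 5 + 5 + 5 = 10 * (m + 1) + 5 := by ring
  rw [hn] at E
  convert E using 1
  rw [coe_groups, hp, mul_nsmul']
  simp only [nsmul_add, Finset.sum_add_distrib]
  rw [Finset.sum_range_succ' (fun i => 5 • ({1 / 3 + 21 * dl i} : Multiset ℝ)),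
    Finset.sum_range_succ (fun i => 3 • ({1 / 6 - dl i} : Multiset ℝ)),
    Finset.sum_range_succ (fun i => 2 • 4 • ({1 / 6 - dl i} : Multiset ℝ))]
  simp only [Finset.sum_const, Finset.card_range, Finset.sum_nsmul, hU]
  module

/-- For k ≥ 10, every ε > 0 and every N there is an input `L` with
OPT(L) ≥ N and FF(L) ≥ (2.7 − 3/k − ε)·OPT(L): the asymptotic competitive ratio of
First Fit for k ≥ 10 is at least 2.7 − 3/k. -/
theorem ff_lb_large_k (k : ℕ) (hk : 10 ≤ k) (ε : ℝ) (hε : 0 < ε) (N : ℕ) :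
    ∃ L : List ℝ, ValidInput L ∧ N ≤ OPT k L ∧
      ((2.7 : ℝ) - 3 / k - ε) * (OPT k L : ℝ) ≤ (FF k L : ℝ) := by
  have hk0 : (0 : ℝ) < k := by exact_mod_cast (by omega : 0 < k)
  -- `q` exceeds `N` and makes the additive error `5` negligible compared with `10 M ε`.
  obtain ⟨q₀, hq₀⟩ := exists_nat_ge (2 / ε)
  set q : ℕ := q₀ + N + 1 with hq
  obtain ⟨m, hm⟩ : ∃ m, k * q = m + 1 := Nat.exists_eq_succ_of_ne_zero (by positivity)
  set z : ℝ := dl m / 2 with hz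
  have hz0 : 0 < z := by have := dl_pos m; positivity
  have hz1 : z ≤ 1 / 2000 := by have := dl_le m; linarith
  set t : ℝ := z / k with ht
  set h : ℝ := 1 / 2 + z with hh
  set p : ℕ := 10 * (k - 3) * q with hp
  have hkt : (k : ℝ) * t = z := by rw [ht]; field_simp
  have ht0 : 0 < t := by positivity
  have hgood := groups_good (p := p) (M := m + 1) (t := t) (h := h) hk ht0 (by linarith)
    (by linarith) (by linarith)
  have hpk : p * k = 10 * (m + 1) * (k - 3) := by rw [← hm, hp]; ring
  have hpack : Packs k ((groups k p (m + 1) t h).flatten : Multiset ℝ) (10 * (m + 1) + 5) := by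
    refine packs_total hk hpk ?_
    have : ((k - 3 : ℕ) : ℝ) * t ≤ k * t := by gcongr; omega
    linarith
  have hFF := FF_flatten hgood (groups_pairwise (p := p) (M := m + 1) (t := t) (by linarith))
  rw [groups_length] at hFF
  have hub := OPT_le_of_packs hpack
  have hlb := length_le_mul_OPT hpack
  have hlen : (groups k p (m + 1) t h).flatten.length = k * (10 * (m + 1)) := by
    rw [← Multiset.coe_card, coe_groups, hpk]
    simp only [Multiset.card_add, Multiset.card_nsmul, Multiset.card_singleton, Multiset.card_sum,
      Finset.sum_const, Finset.card_range, smul_eq_mul]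
    obtain ⟨j, rfl⟩ := Nat.exists_eq_add_of_le (by omega : 3 ≤ k)
    rw [Nat.add_sub_cancel_left]
    ring
  rw [hlen] at hlb
  have hlb' := Nat.le_of_mul_le_mul_left hlb (by omega)
  refine ⟨(groups k p (m + 1) t h).flatten, ?_, ?_, ?_⟩
  · intro x hx
    obtain ⟨l, hl, hxl⟩ := List.mem_flatten.mp hx
    obtain ⟨-, hpos, -, hs⟩ := hgood l hl
    exact ⟨hpos x hxl, (List.single_le_sum (fun y hy => (hpos y hy).le) x hxl).trans hs⟩
  · have : q ≤ k * q := Nat.le_mul_of_pos_left _ (by omega)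
    omega
  · rw [hFF]
    rcases le_total ((2.7 : ℝ) - 3 / k - ε) 0 with hneg | hpos
    · exact (mul_nonpos_of_nonpos_of_nonneg hneg (by positivity)).trans (by positivity)
    · refine (mul_le_mul_of_nonneg_left (Nat.cast_le.mpr hub) hpos).trans ?_
      have hM : ((m : ℝ) + 1) = k * q := by exact_mod_cast hm.symm
      have hpr : (p : ℝ) = 10 * (k - 3) * q := by
        rw [hp]; push_cast [Nat.cast_sub (by omega : 3 ≤ k)]; ring
      have h3 : 3 / (k : ℝ) * (k * q) = 3 * q := by field_simp
      have h3' : 0 < 3 / (k : ℝ) := by positivity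
      have hεq : 2 ≤ ε * (k * q) := by
        have h1 : 2 ≤ ε * q₀ := by rwa [div_le_iff₀' hε] at hq₀
        have h2 : (q₀ : ℝ) ≤ k * q := by
          exact_mod_cast (by omega : q₀ ≤ q).trans (Nat.le_mul_of_pos_left _ (by omega))
        exact h1.trans (by gcongr)
      push_cast
      rw [hM, hpr]
      nlinarith
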